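/- arXiv:1506.06817 — 2 statements merged into one kernel-verified Lean document; each statement's English description precedes it below -/
import Mathlib

section
/- For every integer r ≥ 0 there exists a system of (r-1)r/2 + 2 anonymous processes such that, for any binary consensus algorithm using atomic read-write registers and satisfying nondeterministic solo termination, a configuration C_r is reachable by an execution E_r with the following properties: (1) there is a set R of r registers each of which has been written to during E_r, and (2) C_r is bivalent, i.e., some solo execution of some process from C_r returns 0 and some solo execution of some process from C_r returns 1. -/
/-!  A model of asynchronous shared memory with atomic read-write registers and
anonymous processes: all processes run the same (possibly nondeterministic /
randomized) code, given by an `Algo`. -/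

/-- A shared-memory operation: read value `v` from register `r`, or write `v` to `r`. -/
inductive Op (Reg Val : Type) where
  | read  (r : Reg) (v : Val)
  | write (r : Reg) (v : Val)

/-- The register accessed by an operation. -/
def Op.target {Reg Val : Type} : Op Reg Val → Reg
  | .read r _ => r
  | .write r _ => r

/-- An anonymous algorithm: the initial state determined by the binary input,
the initial register contents, the (possibly nondeterministic) transition
relation between local states, and the output (decision, if already returned). -/
structure Algo (Reg Val State : Type) where
  init : Bool → State
  initReg : Reg → Val
  step : State → Op Reg Val → State → Prop
  output : State → Option Bool

/-- A configuration: the state of every process and the contents of every register. -/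
structure Config (Proc Reg Val State : Type) where
  pstate : Proc → State
  regs : Reg → Val

variable {Proc Reg Val State : Type}

/-- Process `p` performs operation `o`, taking configuration `C` to `C'`:
a read must read the actual register contents, a write updates the register. -/
def Algo.Takes [DecidableEq Reg] (A : Algo Reg Val State) (C : Config Proc Reg Val State)
    (p : Proc) (o : Op Reg Val) (C' : Config Proc Reg Val State) : Prop :=
  A.step (C.pstate p) o (C'.pstate p) ∧ (∀ q, q ≠ p → C'.pstate q = C.pstate q) ∧
    match o with
    | .read r v => C.regs r = v ∧ C'.regs = C.regs
    | .write r v => C'.regs = Function.update C.regs r v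

/-- `A.Exec C sched C'`: the schedule `sched` is a legal execution interval taking
configuration `C` to configuration `C'`. -/
inductive Algo.Exec [DecidableEq Reg] (A : Algo Reg Val State) :
    Config Proc Reg Val State → List (Proc × Op Reg Val) → Config Proc Reg Val State → Prop
  | nil (C : Config Proc Reg Val State) : Algo.Exec A C [] C
  | cons {C C₁ C₂ : Config Proc Reg Val State} {p : Proc} {o : Op Reg Val}
      {l : List (Proc × Op Reg Val)} :
      A.Takes C p o C₁ → Algo.Exec A C₁ l C₂ → Algo.Exec A C ((p, o) :: l) C₂

/-- The initial configuration for given inputs. -/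
def Algo.initConfig (A : Algo Reg Val State) (inputs : Proc → Bool) :
    Config Proc Reg Val State :=
  ⟨fun p => A.init (inputs p), A.initReg⟩

/-- `C` is reachable from the initial configuration for `inputs`. -/
def Algo.Reachable [DecidableEq Reg] (A : Algo Reg Val State) (inputs : Proc → Bool)
    (C : Config Proc Reg Val State) : Prop :=
  ∃ sched, A.Exec (A.initConfig inputs) sched C

/-- The set of registers written to during `sched`. -/
def writes (sched : List (Proc × Op Reg Val)) : Set Reg :=
  {r | ∃ p v, (p, Op.write r v) ∈ sched}

/-- The list of registers written to (with multiplicity) during `sched`. -/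
def writesList (sched : List (Proc × Op Reg Val)) : List Reg :=
  sched.filterMap fun s => match s.2 with | .write r _ => some r | .read _ _ => none

/-- All steps of `sched` are taken by process `p`. -/
def Solo (p : Proc) (sched : List (Proc × Op Reg Val)) : Prop := ∀ s ∈ sched, s.1 = p

/-- Some solo execution of process `p` from `C` ends with `p` having returned `b`. -/
def SoloReturns [DecidableEq Reg] (A : Algo Reg Val State) (C : Config Proc Reg Val State)
    (p : Proc) (b : Bool) : Prop :=
  ∃ sched C', Solo p sched ∧ A.Exec C sched C' ∧ A.output (C'.pstate p) = some b

/-- Agreement: in every reachable configuration, all returned outputs are equal. -/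
def Agreement [DecidableEq Reg] (A : Algo Reg Val State) (inputs : Proc → Bool) : Prop :=
  ∀ C, A.Reachable inputs C → ∀ p q bp bq,
    A.output (C.pstate p) = some bp → A.output (C.pstate q) = some bq → bp = bq

/-- Validity: every returned output is the input of some participating process. -/
def Validity [DecidableEq Reg] (A : Algo Reg Val State) (inputs : Proc → Bool) : Prop :=
  ∀ sched C, A.Exec (A.initConfig inputs) sched C → ∀ p b,
    A.output (C.pstate p) = some b → ∃ q o, (q, o) ∈ sched ∧ inputs q = b

/-- Nondeterministic solo termination: from every reachable configuration, every
process that has not returned has a finite solo execution in which it returns. -/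
def SoloTermination [DecidableEq Reg] (A : Algo Reg Val State) (inputs : Proc → Bool) : Prop :=
  ∀ C, A.Reachable inputs C → ∀ p, A.output (C.pstate p) = none →
    ∃ sched C', Solo p sched ∧ A.Exec C sched C' ∧ (A.output (C'.pstate p)).isSome

/-- Every execution writes to at most `m` distinct registers. -/
def SpaceBound [DecidableEq Reg] (A : Algo Reg Val State) (inputs : Proc → Bool)
    (m : ℕ) : Prop :=
  ∀ sched C, A.Exec (A.initConfig inputs) sched C → (writesList sched).toFinset.card ≤ m

namespace SRI

/-- effect of an operation on registers -/
def eff [DecidableEq Reg] : Op Reg Val → (Reg → Val) → (Reg → Val)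
  | .read _ _, f => f
  | .write r v, f => Function.update f r v

/-- an operation is enabled -/
def ok : Op Reg Val → (Reg → Val) → Prop
  | .read r v, f => f r = v
  | .write _ _, _ => True

theorem takes_iff [DecidableEq Reg] (A : Algo Reg Val State) (C C' : Config Proc Reg Val State)
    (p : Proc) (o : Op Reg Val) : A.Takes C p o C' ↔
    A.step (C.pstate p) o (C'.pstate p) ∧ (∀ q, q ≠ p → C'.pstate q = C.pstate q) ∧
      ok o C.regs ∧ C'.regs = eff o C.regs := by
  cases o <;> simp [Algo.Takes, ok, eff]

theorem eff_eff [DecidableEq Reg] (o : Op Reg Val) (f : Reg → Val) :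
    eff o (eff o f) = eff o f := by
  cases o <;> simp [eff]

theorem ok_eff [DecidableEq Reg] (o : Op Reg Val) (f : Reg → Val) (h : ok o f) :
    ok o (eff o f) := by
  cases o <;> simp_all [eff, ok]

theorem exec_append [DecidableEq Reg] {A : Algo Reg Val State}
    {C C' C'' : Config Proc Reg Val State} {l l' : List (Proc × Op Reg Val)}
    (h : A.Exec C l C') (h' : A.Exec C' l' C'') : A.Exec C (l ++ l') C'' := by
  induction h with
  | nil C => exact h'
  | cons ht _ ih => exact .cons ht (ih h')

theorem exec_split [DecidableEq Reg] {A : Algo Reg Val State}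
    (l l' : List (Proc × Op Reg Val)) : ∀ {C C'' : Config Proc Reg Val State},
    A.Exec C (l ++ l') C'' → ∃ C', A.Exec C l C' ∧ A.Exec C' l' C'' := by
  induction l with
  | nil => intro C C'' h; exact ⟨C, .nil C, h⟩
  | cons a l ih =>
    intro C C'' h
    cases h with
    | cons ht hr =>
      obtain ⟨C', h1, h2⟩ := ih hr
      exact ⟨C', .cons ht h1, h2⟩

theorem exec_one [DecidableEq Reg] {A : Algo Reg Val State}
    {C C' : Config Proc Reg Val State} {p : Proc} {o : Op Reg Val}
    (h : A.Takes C p o C') : A.Exec C [(p, o)] C' := .cons h (.nil _)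

theorem exec_pstate [DecidableEq Reg] {A : Algo Reg Val State}
    {C C' : Config Proc Reg Val State} {l : List (Proc × Op Reg Val)}
    (h : A.Exec C l C') (z : Proc) (hz : ∀ s ∈ l, s.1 ≠ z) : C'.pstate z = C.pstate z := by
  induction h with
  | nil C => rfl
  | cons ht _ ih =>
    rw [ih (fun s hs => hz s (by simp [hs]))]
    exact ht.2.1 z (fun e => hz _ List.mem_cons_self e.symm)

theorem exec_regs [DecidableEq Reg] {A : Algo Reg Val State}
    {C C' : Config Proc Reg Val State} {l : List (Proc × Op Reg Val)}
    (h : A.Exec C l C') (y : Reg) (hy : y ∉ writes l) : C'.regs y = C.regs y := by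
  induction h with
  | nil C => rfl
  | @cons C C₁ C₂ p o l ht _ ih =>
    rw [ih (fun hs => hy (by obtain ⟨p, v, h⟩ := hs; exact ⟨p, v, by simp [h]⟩))]
    rw [((takes_iff _ _ _ _ _).1 ht).2.2.2]
    cases o with
    | read => rfl
    | write x v =>
      have : y ≠ x := by
        rintro rfl
        exact hy ⟨p, v, by simp⟩
      simp [eff, this]

theorem solo_transfer [DecidableEq Reg] {A : Algo Reg Val State}
    {C C' : Config Proc Reg Val State} {l : List (Proc × Op Reg Val)} {p : Proc}
    (h : A.Exec C l C') : Solo p l → ∀ D : Config Proc Reg Val State,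
    D.pstate p = C.pstate p → D.regs = C.regs →
    ∃ D', A.Exec D l D' ∧ D'.pstate p = C'.pstate p ∧ D'.regs = C'.regs := by
  induction h with
  | nil C => intro _ D h1 h2; exact ⟨D, .nil D, h1, h2⟩
  | @cons C C₁ C₂ p' o l ht _ ih =>
    intro hs D h1 h2
    classical
    have hp : p' = p := hs (p', o) (by simp)
    subst hp
    rw [takes_iff] at ht
    obtain ⟨D', e, a, b⟩ := ih (fun s hs' => hs s (by simp [hs']))
      ⟨Function.update D.pstate p' (C₁.pstate p'), C₁.regs⟩ (by simp) rfl
    refine ⟨D', .cons ?_ e, a, b⟩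
    rw [takes_iff]
    refine ⟨by simpa [h1] using ht.1, fun q hq => by simp [hq], by simpa [h2] using ht.2.2.1, ?_⟩
    simpa [h2] using ht.2.2.2

theorem returns_transfer [DecidableEq Reg] {A : Algo Reg Val State}
    {C D : Config Proc Reg Val State} {p : Proc} {b : Bool} (h : SoloReturns A C p b)
    (h1 : D.pstate p = C.pstate p) (h2 : D.regs = C.regs) : SoloReturns A D p b := by
  obtain ⟨l, C', hs, he, ho⟩ := h
  obtain ⟨D', e, a, _⟩ := solo_transfer he hs D h1 h2
  exact ⟨l, D', hs, e, by rw [a]; exact ho⟩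

theorem exists_returns [DecidableEq Reg] {A : Algo Reg Val State} {inputs : Proc → Bool}
    (hT : SoloTermination A inputs) {C : Config Proc Reg Val State}
    (hC : A.Reachable inputs C) (p : Proc) : ∃ b, SoloReturns A C p b := by
  cases h : A.output (C.pstate p) with
  | some b => exact ⟨b, [], C, by simp [Solo], .nil C, h⟩
  | none =>
    obtain ⟨l, C', hs, he, ho⟩ := hT C hC p h
    obtain ⟨b, hb⟩ := Option.isSome_iff_exists.1 ho
    exact ⟨b, l, C', hs, he, hb⟩

theorem solo_split (R : Finset Reg) (p : Proc) (l : List (Proc × Op Reg Val)) (hs : Solo p l) :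
    (∀ y ∈ writes l, y ∈ R) ∨ ∃ l1 x v l2, l = l1 ++ (p, Op.write x v) :: l2 ∧
      (∀ y ∈ writes l1, y ∈ R) ∧ x ∉ R := by
  induction l with
  | nil => left; simp [writes]
  | cons a l ih =>
    have hp : a.1 = p := hs a (by simp)
    obtain ⟨p', o⟩ := a
    simp only at hp
    subst hp
    by_cases hx : ∃ x v, o = Op.write x v ∧ x ∉ R
    · obtain ⟨x, v, rfl, hx⟩ := hx
      exact Or.inr ⟨[], x, v, l, rfl, by simp [writes], hx⟩
    · have key : ∀ l' : List (Proc × Op Reg Val), (∀ y ∈ writes l', y ∈ R) →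
          ∀ y ∈ writes ((p', o) :: l'), y ∈ R := by
        rintro l' h y ⟨p, v, hm⟩
        rcases List.mem_cons.1 hm with hm | hm
        · by_contra hy
          exact hx ⟨y, v, by simp at hm; exact hm.2.symm, hy⟩
        · exact h y ⟨p, v, hm⟩
      rcases ih (fun s h => hs s (by simp [h])) with h | ⟨l1, x, v, l2, rfl, h1, h2⟩
      · exact Or.inl (key _ h)
      · exact Or.inr ⟨(p', o) :: l1, x, v, l2, rfl, key _ h1, h2⟩

/-- all processes of `S`, in the same state, perform the same operation -/
theorem multi [DecidableEq Reg] {A : Algo Reg Val State} (o : Op Reg Val) (s s' : State)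
    (hst : A.step s o s') (C : Config Proc Reg Val State) (hok : ok o C.regs) (S : Finset Proc) :
    (∀ z ∈ S, C.pstate z = s) → ∃ l C', A.Exec C l C' ∧ (∀ t ∈ l, t.1 ∈ S ∧ t.2 = o) ∧
      (∀ z ∈ S, (z, o) ∈ l) ∧
      (∀ z ∈ S, C'.pstate z = s') ∧ (∀ z, z ∉ S → C'.pstate z = C.pstate z) ∧
      (S.Nonempty → C'.regs = eff o C.regs) ∧
      (C'.regs = C.regs ∨ C'.regs = eff o C.regs) := by
  classical
  induction S using Finset.induction_on with
  | empty => intro _; exact ⟨[], C, .nil C, by simp, by simp, by simp, by simp, by simp, by simp⟩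
  | insert a S ha ih =>
    intro hS
    obtain ⟨l, C', he, h1, h0, h2, h3, h4, h5⟩ := ih (fun z hz => hS z (by simp [hz]))
    have hr : eff o C'.regs = eff o C.regs := by
      rcases h5 with h | h <;> rw [h]
      exact eff_eff _ _
    have hk : ok o C'.regs := by
      rcases h5 with h | h <;> rw [h]
      · exact hok
      · exact ok_eff _ _ hok
    refine ⟨l ++ [(a, o)], ⟨Function.update C'.pstate a s', eff o C.regs⟩,
      exec_append he (exec_one ?_), ?_, ?_, ?_, ?_, by simp, by simp⟩
    · rw [takes_iff]
      refine ⟨?_, fun q hq => by simp [hq], hk, hr.symm⟩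
      rw [h3 a ha, hS a (by simp)]
      simpa using hst
    · intro t ht
      rcases List.mem_append.1 ht with ht | ht
      · exact ⟨by simp [(h1 t ht).1], (h1 t ht).2⟩
      · simp at ht; subst ht; simp
    · intro z hz
      rcases Finset.mem_insert.1 hz with rfl | hz
      · simp
      · simp [h0 z hz]
    · intro z hz
      by_cases e : z = a
      · subst e; simp
      · simp [e, h2 z (by simpa [e] using hz)]
    · intro z hz
      simp at hz
      simp [hz.1, h3 z hz.2]

theorem clone [Fintype Proc] [DecidableEq Reg] {A : Algo Reg Val State} (inputs : Proc → Bool)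
    (E : List (Proc × Op Reg Val)) : ∀ (C : Config Proc Reg Val State),
    A.Exec (A.initConfig inputs) E C → ∀ mode : Proc → Proc ⊕ Reg,
    (∀ t ∈ E, mode t.1 = .inl t.1) → (∀ z y, mode z = .inr y → y ∈ writes E) →
    ∃ inputs' E' C', A.Exec (A.initConfig inputs') E' C' ∧ C'.regs = C.regs ∧
      (∀ y ∈ writes E, y ∈ writes E') ∧
      (∀ t ∈ E', (∃ s ∈ E, mode t.1 = .inl s.1) ∨ ∃ y, mode t.1 = .inr y) ∧
      (∀ z p, mode z = .inl p → C'.pstate z = C.pstate p) ∧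
      (∀ z y, mode z = .inr y → ∃ s', A.step (C'.pstate z) (.write y (C.regs y)) s') := by
  classical
  induction E using List.reverseRecOn with
  | nil =>
    intro C hC mode _ h2
    cases hC
    refine ⟨fun z => match mode z with | .inl p => inputs p | .inr _ => true, [], _, .nil _, rfl,
      by simp, by simp, ?_, ?_⟩
    · intro z p h
      simp [Algo.initConfig, h]
    · intro z y h
      have := h2 z y h
      simp [writes] at this
  | append_singleton E a ih =>
    intro C hC mode h1 h2
    obtain ⟨p, o⟩ := a
    obtain ⟨C0, hC0, hlast⟩ := exec_split _ _ hC
    cases hlast with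
    | cons ht hn =>
    cases hn
    rw [takes_iff] at ht
    obtain ⟨hst, hoth, hok, hregs⟩ := ht
    have hmp : mode p = .inl p := h1 (p, o) (by simp)
    let mode0 : Proc → Proc ⊕ Reg := fun z =>
      if ∃ x v, o = Op.write x v ∧ mode z = .inr x then .inl p else mode z
    have m_inl : ∀ z q, mode z = .inl q → mode0 z = .inl q := by
      intro z q h; simp [mode0, h]
    obtain ⟨inputs', E', C', he, hr, hw, hpr, hil, hir⟩ := ih C0 hC0 mode0
      (fun t ht => m_inl _ _ (h1 t (by simp [ht]))) (by
        intro z y h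
        by_cases hc : ∃ x v, o = Op.write x v ∧ mode z = .inr x
        · simp only [mode0, if_pos hc] at h
          cases h
        · have h' : mode z = .inr y := by simpa only [mode0, if_neg hc] using h
          obtain ⟨q, v, hm⟩ := h2 z y h'
          rcases List.mem_append.1 hm with hm | hm
          · exact ⟨q, v, hm⟩
          · simp at hm
            exact absurd ⟨y, v, hm.2.symm, h'⟩ hc)
    obtain ⟨l, C'', he2, hl1, hl2, hs1, hs2, hne, _⟩ := multi o _ _ hst C' (by rw [hr]; exact hok)
      (Finset.univ.filter fun z => mode z = .inl p) (by
        intro z hz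
        exact hil z p (m_inl _ _ (by simpa using hz)))
    have hregs'' : C''.regs = C.regs := by
      rw [hne ⟨p, by simp [hmp]⟩, hregs, hr]
    refine ⟨inputs', E' ++ l, C'', exec_append he he2, hregs'', ?_, ?_, ?_, ?_⟩
    · rintro y ⟨q, v, hm⟩
      rcases List.mem_append.1 hm with hm | hm
      · obtain ⟨q', v', hm'⟩ := hw y ⟨q, v, hm⟩
        exact ⟨q', v', by simp [hm']⟩
      · simp at hm
        refine ⟨p, v, ?_⟩
        rw [hm.2]
        exact List.mem_append_right _ (hl2 p (by simp [hmp]))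
    · intro t ht
      rcases List.mem_append.1 ht with ht | ht
      · by_cases hc : ∃ x v, o = Op.write x v ∧ mode t.1 = .inr x
        · obtain ⟨x, v, _, h⟩ := hc
          exact Or.inr ⟨x, h⟩
        · have e : mode0 t.1 = mode t.1 := by simp only [mode0, if_neg hc]
          have := hpr t ht
          rw [e] at this
          rcases this with ⟨s, hs, h⟩ | h
          · exact Or.inl ⟨s, by simp [hs], h⟩
          · exact Or.inr h
      · have := (hl1 t ht).1
        exact Or.inl ⟨(p, o), by simp, by simpa using this⟩
    · intro z q h
      by_cases e : q = p
      · subst e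
        exact hs1 z (by simp [h])
      · rw [hs2 z (by simp [h, e]), hil z q (m_inl _ _ h), hoth q e]
    · intro z y h
      rw [hs2 z (by simp [h])]
      by_cases hc : ∃ x v, o = Op.write x v ∧ mode z = .inr x
      · have e : mode0 z = .inl p := by simp only [mode0, if_pos hc]
        obtain ⟨x, v, rfl, hx⟩ := hc
        rw [h] at hx
        cases hx
        rw [hil z p e, hregs]
        exact ⟨_, by simpa [eff] using hst⟩
      · have e : mode0 z = .inr y := by simp only [mode0, if_neg hc, h]
        have := hir z y e
        have e2 : C.regs y = C0.regs y := by
          rw [hregs]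
          cases o with
          | read => rfl
          | write x v =>
            have : y ≠ x := by rintro rfl; exact hc ⟨y, v, rfl, h⟩
            simp [eff, this]
        rwa [e2]

theorem block [DecidableEq Reg] {A : Algo Reg Val State} (D : Config Proc Reg Val State)
    (c : Reg → Proc) (v : Reg → Val) (R : Finset Reg) : Set.InjOn c R →
    (∀ y ∈ R, ∃ s', A.step (D.pstate (c y)) (.write y (v y)) s') →
    ∃ l D', A.Exec D l D' ∧ (∀ t ∈ l, ∃ y ∈ R, t.1 = c y) ∧
      (∀ y ∈ R, D'.regs y = v y) ∧ (∀ y, y ∉ R → D'.regs y = D.regs y) := by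
  classical
  induction R using Finset.induction_on with
  | empty => intro _ _; exact ⟨[], D, .nil D, by simp, by simp, by simp⟩
  | insert a R ha ih =>
    intro hc hp
    obtain ⟨l, D', he, h1, h2, h3⟩ := ih (hc.mono (by simp)) (fun y hy => hp y (by simp [hy]))
    obtain ⟨s', hs'⟩ := hp a (by simp)
    have hst : D'.pstate (c a) = D.pstate (c a) := by
      apply exec_pstate he
      intro s hs e
      obtain ⟨y, hy, h⟩ := h1 s hs
      have : y = a := hc (by simp [hy]) (by simp) (h.symm.trans e)
      exact ha (this ▸ hy)
    refine ⟨l ++ [(c a, .write a (v a))],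
      ⟨Function.update D'.pstate (c a) s', Function.update D'.regs a (v a)⟩,
      exec_append he (exec_one ?_), ?_, ?_, ?_⟩
    · rw [takes_iff]
      exact ⟨by simpa [hst] using hs', fun q hq => by simp [hq], trivial, rfl⟩
    · intro t ht
      rcases List.mem_append.1 ht with ht | ht
      · obtain ⟨y, hy, h⟩ := h1 t ht
        exact ⟨y, by simp [hy], h⟩
      · simp at ht; subst ht
        exact ⟨a, by simp, rfl⟩
    · intro y hy
      by_cases e : y = a
      · subst e; simp
      · simp [e, h2 y (by simpa [e] using hy)]
    · intro y hy
      simp at hy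
      simp [hy.1, h3 y hy.2]

/-- configuration after `p` writes -/
def W [DecidableEq Proc] [DecidableEq Reg] (p : Proc) (s' : State) (x : Reg) (v : Val)
    (D : Config Proc Reg Val State) : Config Proc Reg Val State :=
  ⟨Function.update D.pstate p s', Function.update D.regs x v⟩

theorem W_takes [DecidableEq Proc] [DecidableEq Reg] {A : Algo Reg Val State} {p : Proc}
    {s' : State} {x : Reg} {v : Val} {D : Config Proc Reg Val State}
    (h : A.step (D.pstate p) (.write x v) s') : A.Takes D p (.write x v) (W p s' x v D) := by
  rw [takes_iff]
  exact ⟨by simpa [W] using h, fun q hq => by simp [W, hq], trivial, rfl⟩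

theorem adj [DecidableEq Proc] [DecidableEq Reg] {A : Algo Reg Val State} {inputs : Proc → Bool}
    (hT : SoloTermination A inputs) {p q : Proc} {s' : State} {x : Reg} {v : Val} {o : Op Reg Val}
    {D D1 : Config Proc Reg Val State} (hqp : q ≠ p) (ht : A.Takes D q o D1)
    (hr : A.Reachable inputs (W p s' x v D)) (hr1 : A.Reachable inputs (W p s' x v D1)) :
    ∃ b, ∃ z, (z = p ∨ z = q) ∧ SoloReturns A (W p s' x v D) z b ∧
      SoloReturns A (W p s' x v D1) z b := by
  rw [takes_iff] at ht
  obtain ⟨h1, h2, h3, h4⟩ := ht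
  by_cases hx : o.target = x
  · obtain ⟨b, hb⟩ := exists_returns hT hr p
    refine ⟨b, p, .inl rfl, hb, returns_transfer hb (by simp [W]) ?_⟩
    cases o with
    | read y u => simp [W, h4, eff]
    | write y u =>
      simp only [Op.target] at hx
      subst hx
      simp [W, h4, eff]
  · obtain ⟨b, l, C', hs, he, ho⟩ := exists_returns hT hr1 q
    refine ⟨b, q, .inr rfl, ⟨(q, o) :: l, C', ?_, .cons ?_ he, ho⟩, l, C', hs, he, ho⟩
    · intro t ht
      rcases List.mem_cons.1 ht with rfl | ht
      · rfl
      · exact hs t ht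
    · rw [takes_iff]
      refine ⟨by simpa [W, hqp] using h1, ?_, ?_, ?_⟩
      · intro z hz
        by_cases e : z = p
        · subst e; simp [W]
        · simp [W, e, h2 z hz]
      · cases o with
        | read y u => 
          have hx' : y ≠ x := hx
          simpa [W, ok, hx'] using h3
        | write y u => trivial
      · cases o with
        | read y u => simp [W, h4, eff]
        | write y u =>
          simp only [W, h4, eff]
          exact Function.update_comm (fun e => hx e) _ _ _

theorem chain [DecidableEq Proc] [DecidableEq Reg] {A : Algo Reg Val State} {inputs : Proc → Bool}
    (hT : SoloTermination A inputs) (U : Finset Proc) {p : Proc} (hpU : p ∈ U)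
    {s s' : State} {x : Reg} {v : Val} (hst : A.step s (.write x v) s')
    {D D' : Config Proc Reg Val State} {l : List (Proc × Op Reg Val)} (he : A.Exec D l D') :
    A.Reachable inputs D → D.pstate p = s → (∀ t ∈ l, t.1 ≠ p ∧ t.1 ∈ U) →
    (∃ z ∈ U, SoloReturns A (W p s' x v D) z false) →
    (∃ z ∈ U, SoloReturns A (W p s' x v D') z true) →
    ∃ l1 D1, A.Exec D l1 D1 ∧ D1.pstate p = s ∧ (∀ t ∈ l1, t.1 ∈ U) ∧
      (∃ z ∈ U, SoloReturns A (W p s' x v D1) z false) ∧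
      (∃ z ∈ U, SoloReturns A (W p s' x v D1) z true) := by
  induction he with
  | nil D => intro _ h2 _ h4 h5; exact ⟨[], D, .nil D, h2, by simp, h4, h5⟩
  | @cons D D1 D2 q o l ht he ih =>
    intro h1 h2 h3 h4 h5
    have hq := h3 (q, o) (by simp)
    simp only at hq
    have hr1 : A.Reachable inputs D1 := by
      obtain ⟨E, hE⟩ := h1
      exact ⟨_, exec_append hE (exec_one ht)⟩
    have hp1 : D1.pstate p = s := by rw [ht.2.1 p hq.1.symm, h2]
    have rw_ : ∀ D : Config Proc Reg Val State, A.Reachable inputs D → D.pstate p = s →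
        A.Reachable inputs (W p s' x v D) := by
      rintro D ⟨E, hE⟩ hs
      exact ⟨_, exec_append hE (exec_one (W_takes (by rw [hs]; exact hst)))⟩
    obtain ⟨b, z, hz, hb, hb1⟩ := adj hT hq.1 ht (rw_ D h1 h2) (rw_ D1 hr1 hp1)
    have hzU : z ∈ U := by rcases hz with rfl | rfl; exacts [hpU, hq.2]
    cases b with
    | true => exact ⟨[], D, .nil D, h2, by simp, h4, z, hzU, hb⟩
    | false =>
      obtain ⟨l1, D3, a1, a2, a3, a4⟩ := ih hr1 hp1 (fun t ht => h3 t (by simp [ht]))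
        ⟨z, hzU, hb1⟩ h5
      refine ⟨(q, o) :: l1, D3, .cons ht a1, a2, ?_, a4⟩
      intro t ht
      rcases List.mem_cons.1 ht with rfl | ht
      · exact hq.2
      · exact a3 t ht

/-- the inductive claim -/
def Claim (Proc : Type) {Reg Val State : Type} [DecidableEq Reg] (A : Algo Reg Val State)
    (n k : ℕ) : Prop :=
  ∃ (inputs : Proc → Bool) (E : List (Proc × Op Reg Val)) (C : Config Proc Reg Val State)
    (U : Finset Proc) (R : Finset Reg) (p q : Proc),
    A.Exec (A.initConfig inputs) E C ∧ (∀ t ∈ E, t.1 ∈ U) ∧ U.card ≤ n ∧ R.card = k ∧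
    (∀ y ∈ R, y ∈ writes E) ∧ p ∈ U ∧ q ∈ U ∧ p ≠ q ∧
    SoloReturns A C p false ∧ SoloReturns A C q true

theorem pick {U : Finset Proc} {F : Proc → Bool → Prop} (hF : ∀ z, ∃ b, F z b)
    (hU : ∀ z, ∃ z' ∈ U, z' ≠ z)
    (h0 : ∃ z ∈ U, F z false) (h1 : ∃ z ∈ U, F z true) :
    ∃ p q, p ∈ U ∧ q ∈ U ∧ p ≠ q ∧ F p false ∧ F q true := by
  obtain ⟨a, ha, ha'⟩ := h0
  obtain ⟨b, hb, hb'⟩ := h1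
  by_cases e : a = b
  · subst e
    obtain ⟨z, hz, hne⟩ := hU a
    obtain ⟨w, hw⟩ := hF z
    cases w with
    | false => exact ⟨z, a, hz, ha, hne, hw, hb'⟩
    | true => exact ⟨a, z, ha, hz, hne.symm, ha', hw⟩
  · exact ⟨a, b, ha, hb, e, ha', hb'⟩

theorem writes_append_left {l l' : List (Proc × Op Reg Val)} {y : Reg} (h : y ∈ writes l) :
    y ∈ writes (l ++ l') := by
  obtain ⟨p, v, h⟩ := h
  exact ⟨p, v, by simp [h]⟩

theorem succ_step [Fintype Proc] [DecidableEq Reg] {A : Algo Reg Val State}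
    (hA : ∀ inputs : Proc → Bool, Agreement A inputs)
    (hT : ∀ inputs : Proc → Bool, SoloTermination A inputs) {n k : ℕ}
    (hcard : n + k ≤ Fintype.card Proc) (h : Claim Proc A n k) : Claim Proc A (n + k) (k + 1) := by
  classical
  obtain ⟨inputs, E, C, U, R, p, q, hE, hEU, hUn, hRk, hRE, hpU, hqU, hpq, hp, hq⟩ := h
  obtain ⟨c, hcU, hcI⟩ : ∃ c : Reg → Proc, (∀ y ∈ R, c y ∉ U) ∧ Set.InjOn c R := by
    have : Fintype.card R ≤ Fintype.card (Uᶜ : Finset Proc) := by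
      simp only [Fintype.card_coe, Finset.card_compl]
      omega
    obtain ⟨f⟩ := Function.Embedding.nonempty_of_card_le this
    refine ⟨fun y => if h : y ∈ R then (f ⟨y, h⟩ : Proc) else p, ?_, ?_⟩
    · intro y hy
      simp only [hy, dif_pos]
      exact Finset.mem_compl.1 (f ⟨y, hy⟩).2
    · intro y hy y' hy' e
      simp only [Finset.mem_coe] at hy hy'
      simp only [hy, hy', dif_pos] at e
      have := f.injective (Subtype.ext e)
      simpa using this
  let mode : Proc → Proc ⊕ Reg := fun z =>
    if h : ∃ y ∈ R, c y = z then .inr h.choose else .inl z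
  have mU : ∀ z ∈ U, mode z = .inl z := by
    intro z hz
    have : ¬ ∃ y ∈ R, c y = z := by
      rintro ⟨y, hy, rfl⟩
      exact hcU y hy hz
    simp only [mode, dif_neg this]
  have mR : ∀ y ∈ R, mode (c y) = .inr y := by
    intro y hy
    have h : ∃ y' ∈ R, c y' = c y := ⟨y, hy, rfl⟩
    simp only [mode, dif_pos h]
    congr 1
    exact hcI h.choose_spec.1 hy h.choose_spec.2
  have mr : ∀ z y, mode z = .inr y → y ∈ R ∧ c y = z := by
    intro z y h
    by_cases hc : ∃ y ∈ R, c y = z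
    · simp only [mode, dif_pos hc] at h
      cases h
      exact hc.choose_spec
    · simp [mode, dif_neg hc] at h
  have ml : ∀ z s, mode z = .inl s → z = s := by
    intro z y h
    by_cases hc : ∃ y ∈ R, c y = z
    · simp [mode, dif_pos hc] at h
    · simpa [mode, dif_neg hc] using h
  obtain ⟨inputs', E', C', hE', hregs, hw, hpr, hil, hir⟩ := clone inputs E C hE mode
    (fun t ht => mU _ (hEU t ht)) (fun z y h => hRE y (mr z y h).1)
  let U' := U ∪ R.image c
  have hE'U : ∀ t ∈ E', t.1 ∈ U' := by
    intro t ht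
    rcases hpr t ht with ⟨s, hs, h⟩ | ⟨y, h⟩
    · rw [ml _ _ h]
      exact Finset.mem_union_left _ (hEU s hs)
    · obtain ⟨h1, h2⟩ := mr _ _ h
      rw [← h2]
      exact Finset.mem_union_right _ (Finset.mem_image_of_mem _ h1)
  have hpU' : p ∈ U' := Finset.mem_union_left _ hpU
  have hqU' : q ∈ U' := Finset.mem_union_left _ hqU
  have hU'card : U'.card ≤ n + k := by
    have h1 := Finset.card_union_le U (R.image c)
    have h2 : (R.image c).card ≤ R.card := Finset.card_image_le
    change (U ∪ R.image c).card ≤ _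
    omega
  have hp' := returns_transfer hp (hil p p (mU p hpU)) hregs
  have hq' := returns_transfer hq (hil q q (mU q hqU)) hregs
  obtain ⟨α, Ca, hαs, hα, hαo⟩ := hp'
  -- completing by block write and solo run of q
  have key : ∀ α1 D, Solo p α1 → (∀ y ∈ writes α1, y ∈ R) → A.Exec C' α1 D →
      ∃ l D', A.Exec D l D' ∧ (∀ t ∈ l, t.1 ≠ p ∧ t.1 ∈ U') ∧
        A.output (D'.pstate q) = some true := by
    intro α1 D hs hwR hex
    have hnp : ∀ z, z ≠ p → D.pstate z = C'.pstate z := by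
      intro z hz
      exact exec_pstate hex z (fun s hs' e => hz (e.symm.trans (hs s hs')))
    have hcp : ∀ y ∈ R, c y ≠ p := fun y hy e => hcU y hy (e ▸ hpU)
    have hcq : ∀ y ∈ R, c y ≠ q := fun y hy e => hcU y hy (e ▸ hqU)
    obtain ⟨B, D1, hB, hB1, hB2, hB3⟩ := block (A := A) D c C'.regs R hcI (by
      intro y hy
      rw [hnp _ (hcp y hy), hregs]
      exact hir _ _ (mR y hy))
    have hD1 : D1.regs = C'.regs := by
      funext y
      by_cases hy : y ∈ R
      · exact hB2 y hy
      · rw [hB3 y hy]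
        exact exec_regs hex y (fun h => hy (hwR y h))
    have hD1q : D1.pstate q = C'.pstate q := by
      rw [exec_pstate hB q, hnp q hpq.symm]
      intro s hs' e
      obtain ⟨y, hy, h⟩ := hB1 s hs'
      exact hcq y hy (h.symm.trans e)
    obtain ⟨β, D2, hβs, hβ, hβo⟩ := returns_transfer hq' hD1q hD1
    refine ⟨B ++ β, D2, exec_append hB hβ, ?_, hβo⟩
    intro t ht
    rcases List.mem_append.1 ht with ht | ht
    · obtain ⟨y, hy, h⟩ := hB1 t ht
      rw [h]
      exact ⟨hcp y hy, Finset.mem_union_right _ (Finset.mem_image_of_mem _ hy)⟩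
    · rw [hβs t ht]
      exact ⟨hpq.symm, hqU'⟩
  rcases solo_split R p α hαs with hall | ⟨α1, x, v, α2, rfl, hα1R, hxR⟩
  · exfalso
    obtain ⟨l, D', h1, h2, h3⟩ := key α Ca hαs hall hα
    have := hA inputs' D' ⟨_, exec_append hE' (exec_append hα h1)⟩ p q false true
      (by rw [exec_pstate h1 p (fun s hs => (h2 s hs).1)]; exact hαo) h3
    simp at this
  · obtain ⟨D, hD, hrest⟩ := exec_split _ _ hα
    have hα1s : Solo p α1 := fun s hs => hαs s (by simp [hs])
    have hα2s : Solo p α2 := fun s hs => hαs s (by simp [hs])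
    cases hrest with
    | @cons _ Dw _ _ _ _ ht hrest =>
    have ht' := (takes_iff _ _ _ _ _).1 ht
    obtain ⟨l, D', h1, h2, h3⟩ := key α1 D hα1s hα1R hD
    have hreach : A.Exec (A.initConfig inputs') (E' ++ α1) D := exec_append hE' hD
    obtain ⟨l1, D1, a1, a2, a3, a4, a5⟩ := chain (hT inputs') U' hpU' (s := D.pstate p) ht'.1 h1
      ⟨_, hreach⟩ rfl h2
      ⟨p, hpU', returns_transfer ⟨α2, Ca, hα2s, hrest, hαo⟩ (by simp [W])
        (by simp [W, ht'.2.2.2, eff])⟩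
      ⟨q, hqU', [], _, by simp [Solo], .nil _, by simpa [W, hpq.symm] using h3⟩
    have hfin := exec_append hreach (exec_append a1 (exec_one (W_takes (A := A) (D := D1) (p := p)
      (by rw [a2]; exact ht'.1))))
    obtain ⟨p', q', b1, b2, b3, b4, b5⟩ := pick
      (fun z => exists_returns (hT inputs') ⟨_, hfin⟩ z)
      (fun z => by
        by_cases e : p = z
        · exact ⟨q, hqU', fun h => hpq (e.trans h.symm)⟩
        · exact ⟨p, hpU', e⟩) a4 a5
    refine ⟨inputs', _, _, U', insert x R, p', q', hfin, ?_, hU'card, ?_, ?_, b1, b2, b3, b4, b5⟩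
    · intro t ht
      simp only [List.mem_append, List.mem_singleton] at ht
      rcases ht with (ht | ht) | ht | ht
      · exact hE'U t ht
      · rw [hα1s t ht]; exact hpU'
      · exact a3 t ht
      · rw [ht]; exact hpU'
    · rw [Finset.card_insert_of_notMem hxR, hRk]
    · intro y hy
      rcases Finset.mem_insert.1 hy with rfl | hy
      · exact ⟨p, v, by simp⟩
      · exact writes_append_left (writes_append_left (hw y (hRE y hy)))

theorem base [DecidableEq Reg] {A : Algo Reg Val State}
    (hV : ∀ inputs : Proc → Bool, Validity A inputs)
    (hT : ∀ inputs : Proc → Bool, SoloTermination A inputs) (p q : Proc) (hpq : p ≠ q) :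
    Claim Proc A 2 0 := by
  classical
  let inputs : Proc → Bool := fun z => decide (z = q)
  have key : ∀ z, SoloReturns A (A.initConfig inputs) z (inputs z) := by
    intro z
    obtain ⟨b, l, C', hs, he, ho⟩ := exists_returns (hT inputs) ⟨[], .nil _⟩ z
    obtain ⟨w, o, hm, hw⟩ := hV inputs l C' he z b ho
    have : w = z := hs _ hm
    subst this
    rw [hw]
    exact ⟨l, C', hs, he, ho⟩
  refine ⟨inputs, [], _, {p, q}, ∅, p, q, .nil _, by simp, Finset.card_le_two, rfl, by simp,
    by simp, by simp, hpq, ?_, ?_⟩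
  · simpa [inputs, hpq] using key p
  · simpa [inputs] using key q

theorem arith (k : ℕ) : (k - 1) * k / 2 + 2 + k = (k + 1 - 1) * (k + 1) / 2 + 2 := by
  cases k with
  | zero => rfl
  | succ m =>
    have : (m + 1 + 1 - 1) * (m + 1 + 1) = (m + 1 - 1) * (m + 1) + (m + 1) * 2 := by
      simp only [Nat.add_sub_cancel]; ring
    rw [this, Nat.add_mul_div_right _ _ (by norm_num)]
    omega

theorem claim_all [Fintype Proc] [DecidableEq Reg] {A : Algo Reg Val State}
    (hA : ∀ inputs : Proc → Bool, Agreement A inputs)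
    (hV : ∀ inputs : Proc → Bool, Validity A inputs)
    (hT : ∀ inputs : Proc → Bool, SoloTermination A inputs) (p q : Proc) (hpq : p ≠ q) (k : ℕ) :
    (k - 1) * k / 2 + 2 ≤ Fintype.card Proc → Claim Proc A ((k - 1) * k / 2 + 2) k := by
  induction k with
  | zero => intro _; exact base hV hT p q hpq
  | succ k ih =>
    intro h
    rw [← arith] at h ⊢
    exact succ_step hA hT h (ih (by omega))

end SRI

/-- For every `r ≥ 0` there is a system of `(r-1)r/2 + 2` anonymous
processes such that, for any binary consensus algorithm using atomic read-write
registers and satisfying nondeterministic solo termination, a configuration `C_r`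
is reachable by an execution `E_r` such that (1) some set `R` of `r` registers has
each of its registers written to during `E_r`, and (2) `C_r` is bivalent: some solo
execution from `C_r` returns `0` and some solo execution from `C_r` returns `1`. -/
theorem square_root_induction (r : ℕ) {Reg Val State : Type} [DecidableEq Reg]
    (A : Algo Reg Val State)
    (hAgree : ∀ inputs : Fin ((r - 1) * r / 2 + 2) → Bool, Agreement A inputs)
    (hValid : ∀ inputs : Fin ((r - 1) * r / 2 + 2) → Bool, Validity A inputs)
    (hTerm : ∀ inputs : Fin ((r - 1) * r / 2 + 2) → Bool, SoloTermination A inputs) :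
    ∃ (inputs : Fin ((r - 1) * r / 2 + 2) → Bool)
      (E : List (Fin ((r - 1) * r / 2 + 2) × Op Reg Val))
      (C : Config (Fin ((r - 1) * r / 2 + 2)) Reg Val State),
      A.Exec (A.initConfig inputs) E C ∧
      (∃ R : Finset Reg, R.card = r ∧ ∀ reg ∈ R, reg ∈ writes E) ∧
      (∃ p, SoloReturns A C p false) ∧ (∃ q, SoloReturns A C q true) := by
  obtain ⟨inputs, E, C, U, R, p, q, hE, _, _, hR, hw, _, _, _, h0, h1⟩ :=
    SRI.claim_all hAgree hValid hTerm ⟨0, by omega⟩ ⟨1, by omega⟩ (by simp) r (by simp)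
  exact ⟨inputs, E, C, hE, ⟨R, hR, hw⟩, ⟨p, h0⟩, ⟨q, h1⟩⟩
end

section
/- In a system of n anonymous processes, any binary consensus algorithm using atomic read-write registers and satisfying nondeterministic solo termination must use Ω(n) registers; concretely, for sufficiently large n, either some execution writes to more than n/20 distinct registers outright, or an execution can be constructed in which n/20 distinct registers are written to. -/
variable {Proc Reg Val State : Type}

section Helpers

set_option linter.unusedSectionVars false

variable [DecidableEq Proc] [DecidableEq Reg] {A : Algo Reg Val State}

def Go (A : Algo Reg Val State) (P : Finset Proc) (C C' : Config Proc Reg Val State) : Prop :=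
  ∃ l, (∀ s ∈ l, s.1 ∈ P) ∧ A.Exec C l C'

def Can (A : Algo Reg Val State) (P : Finset Proc) (C : Config Proc Reg Val State)
    (b : Bool) : Prop :=
  ∃ C', Go A P C C' ∧ ∃ p ∈ P, A.output (C'.pstate p) = some b

def Biv (A : Algo Reg Val State) (P : Finset Proc) (C : Config Proc Reg Val State) : Prop :=
  ∀ b, Can A P C b

def Agr (P : Finset Proc) (C C' : Config Proc Reg Val State) : Prop :=
  C'.regs = C.regs ∧ ∀ p ∈ P, C'.pstate p = C.pstate p

theorem exec_append {C D E : Config Proc Reg Val State} {l m : List (Proc × Op Reg Val)}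
    (h : A.Exec C l D) (h' : A.Exec D m E) : A.Exec C (l ++ m) E := by
  induction h with
  | nil => exact h'
  | cons t _ ih => exact .cons t (ih h')

theorem Go.refl (P : Finset Proc) (C : Config Proc Reg Val State) : Go A P C C :=
  ⟨[], by simp, .nil C⟩

theorem Go.trans {P : Finset Proc} {C D E : Config Proc Reg Val State}
    (h : Go A P C D) (h' : Go A P D E) : Go A P C E := by
  obtain ⟨l, hl, e⟩ := h
  obtain ⟨m, hm, e'⟩ := h'
  refine ⟨l ++ m, ?_, exec_append e e'⟩
  intro s hs
  rcases List.mem_append.1 hs with h | h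
  · exact hl s h
  · exact hm s h

theorem Go.mono {P Q : Finset Proc} {C D : Config Proc Reg Val State}
    (h : Go A P C D) (hPQ : P ⊆ Q) : Go A Q C D := by
  obtain ⟨l, hl, e⟩ := h
  exact ⟨l, fun s hs => hPQ (hl s hs), e⟩

theorem Go.one {P : Finset Proc} {C D : Config Proc Reg Val State} {p : Proc} {o : Op Reg Val}
    (hp : p ∈ P) (h : A.Takes C p o D) : Go A P C D :=
  ⟨[(p, o)], by simpa using hp, .cons h (.nil _)⟩

theorem exec_frame {P : Finset Proc} {C D : Config Proc Reg Val State}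
    {l : List (Proc × Op Reg Val)} (h : A.Exec C l D) (hl : ∀ s ∈ l, s.1 ∈ P)
    {p : Proc} (hp : p ∉ P) : D.pstate p = C.pstate p := by
  induction h with
  | nil => rfl
  | @cons C C₁ C₂ q o l t _ ih =>
    rw [ih (fun s hs => hl s (List.mem_cons_of_mem _ hs))]
    refine t.2.1 p ?_
    rintro rfl
    exact hp (hl (p, o) List.mem_cons_self)

theorem Go.frame {P : Finset Proc} {C D : Config Proc Reg Val State}
    (h : Go A P C D) {p : Proc} (hp : p ∉ P) : D.pstate p = C.pstate p := by
  obtain ⟨l, hl, e⟩ := h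
  exact exec_frame e hl hp

theorem Go.reach {P : Finset Proc} {C D : Config Proc Reg Val State} {inputs : Proc → Bool}
    (h : Go A P C D) (hr : A.Reachable inputs C) : A.Reachable inputs D := by
  obtain ⟨l, hl, e⟩ := h
  obtain ⟨m, e'⟩ := hr
  exact ⟨_, exec_append e' e⟩

theorem sim {P : Finset Proc} {C D : Config Proc Reg Val State}
    (h : Go A P C D) : ∀ {C' : Config Proc Reg Val State}, Agr P C C' →
      ∃ D', Go A P C' D' ∧ Agr P D D' := by
  obtain ⟨l, hl, e⟩ := h
  induction e with
  | nil C => intro C' h; exact ⟨C', Go.refl _ _, h⟩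
  | @cons C C₁ C₂ q o l t _ ih =>
    intro C' hA
    have hq : q ∈ P := hl (q, o) List.mem_cons_self
    let C₁' : Config Proc Reg Val State := ⟨Function.update C'.pstate q (C₁.pstate q), C₁.regs⟩
    have t' : A.Takes C' q o C₁' := by
      obtain ⟨t1, t2, t3⟩ := t
      refine ⟨?_, ?_, ?_⟩
      · simp only [C₁', Function.update_self]; rw [hA.2 q hq]; exact t1
      · intro p hp; simp [C₁', hp]
      · cases o with
        | read r v => exact ⟨by rw [hA.1]; exact t3.1, by simp only [C₁']; rw [t3.2, hA.1]⟩
        | write r v => simp only [C₁']; rw [hA.1]; exact t3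
    have hA1 : Agr P C₁ C₁' := by
      refine ⟨rfl, fun p hp => ?_⟩
      by_cases hpq : p = q
      · subst hpq; simp [C₁']
      · simp only [C₁', Function.update_of_ne hpq]
        rw [hA.2 p hp, t.2.1 p hpq]
    obtain ⟨D', g, a⟩ := ih (fun s hs => hl s (List.mem_cons_of_mem _ hs)) hA1
    exact ⟨D', (Go.one hq t').trans g, a⟩

theorem Agr.mono {P Q : Finset Proc} {C D : Config Proc Reg Val State}
    (h : Agr P C D) (hQ : Q ⊆ P) : Agr Q C D := ⟨h.1, fun p hp => h.2 p (hQ hp)⟩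

theorem Can.agr {P : Finset Proc} {C D : Config Proc Reg Val State} {b : Bool}
    (h : Can A P C b) (ha : Agr P C D) : Can A P D b := by
  obtain ⟨C', g, p, hp, ho⟩ := h
  obtain ⟨D', g', a'⟩ := sim g ha
  exact ⟨D', g', p, hp, by rw [a'.2 p hp]; exact ho⟩

theorem Can.mono {P Q : Finset Proc} {C : Config Proc Reg Val State} {b : Bool}
    (h : Can A P C b) (hPQ : P ⊆ Q) : Can A Q C b := by
  obtain ⟨C', g, p, hp, ho⟩ := h
  exact ⟨C', g.mono hPQ, p, hPQ hp, ho⟩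

theorem Can.back {P : Finset Proc} {C D : Config Proc Reg Val State} {b : Bool}
    (h : Can A P D b) (g : Go A P C D) : Can A P C b := by
  obtain ⟨C', g', p, hp, ho⟩ := h
  exact ⟨C', g.trans g', p, hp, ho⟩

theorem can_some {inputs : Proc → Bool} (hS : SoloTermination A inputs) {P : Finset Proc}
    {C : Config Proc Reg Val State} (hr : A.Reachable inputs C) (hP : P.Nonempty) :
    ∃ b, Can A P C b := by
  obtain ⟨p, hp⟩ := hP
  cases ho : A.output (C.pstate p) with
  | some b => exact ⟨b, C, Go.refl _ _, p, hp, ho⟩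
  | none =>
    obtain ⟨l, C', hl, e, hs⟩ := hS C hr p ho
    obtain ⟨b, hb⟩ := Option.isSome_iff_exists.1 hs
    exact ⟨b, C', ⟨l, fun s hs => by rw [hl s hs]; exact hp, e⟩, p, hp, hb⟩

theorem biv_of {P : Finset Proc} {C : Config Proc Reg Val State} {b : Bool}
    (h : Can A P C b) (h' : Can A P C (!b)) : Biv A P C := by
  intro c
  cases b <;> cases c <;> simp_all

/-- the block write -/
def blk (R : Finset Proc) (reg : Proc → Reg) (v : Reg → Val) (s : Proc → State)
    (C : Config Proc Reg Val State) : Config Proc Reg Val State :=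
  ⟨fun p => if p ∈ R then s p else C.pstate p,
   fun r => if r ∈ R.image reg then v r else C.regs r⟩

def Covers (A : Algo Reg Val State) (R : Finset Proc) (reg : Proc → Reg) (v : Reg → Val)
    (s : Proc → State) (C : Config Proc Reg Val State) : Prop :=
  ∀ p ∈ R, A.step (C.pstate p) (.write (reg p) (v (reg p))) (s p)

theorem exec_blk (R : Finset Proc) (reg : Proc → Reg) (v : Reg → Val) (s : Proc → State)
    (C : Config Proc Reg Val State) (h : Covers A R reg v s C) :
    ∃ l, (∀ x ∈ l, x.1 ∈ R) ∧ A.Exec C l (blk R reg v s C) ∧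
      R.image reg ⊆ (writesList l).toFinset := by
  induction R using Finset.induction_on with
  | empty => exact ⟨[], by simp, by simpa [blk] using Algo.Exec.nil C, by simp⟩
  | insert p R hp ih =>
    obtain ⟨l, hl, e, hw⟩ := ih (fun q hq => h q (Finset.mem_insert_of_mem hq))
    refine ⟨l ++ [(p, .write (reg p) (v (reg p)))], ?_, exec_append e (.cons ?_ (.nil _)), ?_⟩
    · intro x hx
      rcases List.mem_append.1 hx with hx | hx
      · exact Finset.mem_insert_of_mem (hl x hx)
      · simp at hx; subst hx; simp
    · refine ⟨?_, ?_, ?_⟩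
      · simpa [blk, hp] using h p (Finset.mem_insert_self _ _)
      · intro q hq; simp [blk, hq]
      · funext r
        by_cases hr : r = reg p
        · subst hr; simp [blk]
        · simp [blk, Function.update_of_ne hr, hr]
    · intro r hr
      rw [Finset.image_insert, Finset.mem_insert] at hr
      rcases hr with rfl | hr
      · simp [writesList]
      · have := hw hr
        simp only [writesList, List.mem_toFinset, List.filterMap_append, List.mem_append] at this ⊢
        exact Or.inl this

theorem go_blk {R : Finset Proc} {reg : Proc → Reg} {v : Reg → Val} {s : Proc → State}
    {C : Config Proc Reg Val State} (h : Covers A R reg v s C) :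
    Go A R C (blk R reg v s C) := by
  obtain ⟨l, hl, e, _⟩ := exec_blk R reg v s C h
  exact ⟨l, hl, e⟩

theorem Covers.go {R Q : Finset Proc} {reg : Proc → Reg} {v : Reg → Val} {s : Proc → State}
    {C D : Config Proc Reg Val State} (h : Covers A R reg v s C) (g : Go A Q C D)
    (hd : Disjoint Q R) : Covers A R reg v s D := by
  intro p hp
  rw [g.frame (fun hq => Finset.disjoint_left.1 hd hq hp)]
  exact h p hp

/-- Lemma 1 -/
theorem drop_one {inputs : Proc → Bool} (hS : SoloTermination A inputs) {V : Finset Proc}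
    (hV : 3 ≤ V.card) {C : Config Proc Reg Val State} (hr : A.Reachable inputs C)
    (hb : Biv A V C) : ∃ z ∈ V, ∃ D, Go A V C D ∧ Biv A (V.erase z) D := by
  have two : ∀ x y : Proc, ((V.erase x).erase y).Nonempty := by
    intro x y
    rw [← Finset.card_pos]
    have h1 := Finset.pred_card_le_card_erase (s := V) (a := x)
    have h2 := Finset.pred_card_le_card_erase (s := V.erase x) (a := y)
    omega
  have key : ∀ (C D : Config Proc Reg Val State) (l : List (Proc × Op Reg Val)) (b : Bool),
      A.Exec C l D → (∀ s ∈ l, s.1 ∈ V) → A.Reachable inputs C →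
      (∀ x ∈ V, Can A (V.erase x) C b) →
      (∃ u ∈ V, A.output (D.pstate u) = some (!b)) →
      ∃ z ∈ V, ∃ D, Go A V C D ∧ Biv A (V.erase z) D := by
    intro C D l b e
    induction e with
    | nil C =>
      intro _ _ hc ⟨u, hu, ho⟩
      obtain ⟨z, hz⟩ := two u u
      have hz1 := (Finset.mem_erase.1 hz).1
      have hz2 := (Finset.mem_erase.1 (Finset.mem_erase.1 hz).2).2
      exact ⟨z, hz2, C, Go.refl _ _, biv_of (hc z hz2)
        ⟨C, Go.refl _ _, u, Finset.mem_erase.2 ⟨hz1.symm, hu⟩, ho⟩⟩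
    | @cons C C₁ C₂ q o l t _ ih =>
      intro hl hr hc hu
      have hq : q ∈ V := hl (q, o) List.mem_cons_self
      have g : Go A V C C₁ := Go.one hq t
      have hr1 := g.reach hr
      by_cases hall : ∀ x ∈ V, Can A (V.erase x) C₁ b
      · obtain ⟨z, hz, D, g', hD⟩ := ih (fun s hs => hl s (List.mem_cons_of_mem _ hs)) hr1 hall hu
        exact ⟨z, hz, D, g.trans g', hD⟩
      · push Not at hall
        obtain ⟨x, hx, hnx⟩ := hall
        by_cases hxq : x = q
        · subst hxq
          -- another y
          obtain ⟨y, hy⟩ := two x x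
          have hyx := (Finset.mem_erase.1 hy).1
          have hyV := (Finset.mem_erase.1 (Finset.mem_erase.1 hy).2).2
          obtain ⟨c, hcc⟩ := can_some hS hr1 (two x y)
          have hcb : c = !b := by
            by_contra hne
            have : c = b := by cases b <;> cases c <;> simp_all
            subst this
            exact hnx (hcc.mono (Finset.erase_subset _ _))
          subst hcb
          have h2 : Can A (V.erase y) C₁ (!b) := hcc.mono (by
            rw [Finset.erase_right_comm]; exact Finset.erase_subset _ _)
          have g1 : Go A (V.erase y) C C₁ := Go.one (Finset.mem_erase.2 ⟨hyx.symm, hq⟩) t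
          exact ⟨y, hyV, C, Go.refl _ _, biv_of (hc y hyV) (h2.back g1)⟩
        · obtain ⟨c, hcc⟩ := can_some hS hr1
            ((two x x).mono (Finset.erase_subset _ _))
          have hcb : c = !b := by
            by_contra hne
            have : c = b := by cases b <;> cases c <;> simp_all
            subst this
            exact hnx hcc
          subst hcb
          have g1 : Go A (V.erase x) C C₁ := Go.one (Finset.mem_erase.2 ⟨fun h => hxq h.symm, hq⟩) t
          exact ⟨x, hx, C, Go.refl _ _, biv_of (hc x hx) (hcc.back g1)⟩
  by_contra hno
  have nb : ∀ x ∈ V, ¬ Biv A (V.erase x) C := fun x hx h => hno ⟨x, hx, C, Go.refl _ _, h⟩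
  have hVne : V.Nonempty := by rw [← Finset.card_pos]; omega
  obtain ⟨x, hx⟩ := hVne
  obtain ⟨b, hbx⟩ := can_some hS hr ((two x x).mono (Finset.erase_subset _ _))
  have hall : ∀ y ∈ V, Can A (V.erase y) C b := by
    intro y hy
    obtain ⟨c, hc⟩ := can_some hS hr (two x y)
    have hcx : Can A (V.erase x) C c := hc.mono (Finset.erase_subset _ _)
    have hcy : Can A (V.erase y) C c := hc.mono (by
      rw [Finset.erase_right_comm]; exact Finset.erase_subset _ _)
    by_cases hcb : c = b
    · subst hcb; exact hcy
    · have : c = !b := by cases b <;> cases c <;> simp_all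
      subst this
      exact absurd (biv_of hbx hcx) (nb x hx)
  obtain ⟨D, ⟨l, hl, e⟩, hu⟩ := hb (!b)
  exact hno (key C D l b e hl hr hall hu)

/-- Lemma 2 -/
theorem block_biv {inputs : Proc → Bool} (hS : SoloTermination A inputs)
    (hA : Agreement A inputs) {Q R : Finset Proc} (hd : Disjoint Q R)
    {reg : Proc → Reg} {v : Reg → Val} {s : Proc → State}
    {C : Config Proc Reg Val State} (hr : A.Reachable inputs C)
    (hcov : Covers A R reg v s C) (hb : Biv A Q C) :
    ∃ D, Go A Q C D ∧ Biv A (Q ∪ R) (blk R reg v s D) := by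
  rcases R.eq_empty_or_nonempty with rfl | hR
  · exact ⟨C, Go.refl _ _, by simpa [blk] using hb⟩
  obtain ⟨b, hcb⟩ := can_some hS ((go_blk hcov).reach hr) hR
  obtain ⟨D, ⟨l, hl, e⟩, u, hu, ho⟩ := hb (!b)
  clear hb
  induction e with
  | nil C =>
    exfalso
    obtain ⟨D, g, p, hp, hp'⟩ := hcb
    have g2 : Go A R C D := (go_blk hcov).trans g
    have h1 : A.output (D.pstate u) = some (!b) := by
      rw [g2.frame (fun h => Finset.disjoint_left.1 hd hu h)]; exact ho
    have := hA D (g2.reach hr) p u _ _ hp' h1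
    cases b <;> simp at this
  | @cons C C₁ C₂ q o l t _ ih =>
    have hq : q ∈ Q := hl (q, o) List.mem_cons_self
    have hqR : q ∉ R := fun h => Finset.disjoint_left.1 hd hq h
    have g : Go A Q C C₁ := Go.one hq t
    have hr1 := g.reach hr
    have hcov1 : Covers A R reg v s C₁ := hcov.go g hd
    by_cases hb1 : Can A R (blk R reg v s C₁) b
    · obtain ⟨D, g', hD⟩ := ih hr1 hcov1 hb1 (fun s hs => hl s (List.mem_cons_of_mem _ hs)) ho
      exact ⟨D, g.trans g', hD⟩
    · obtain ⟨c, hc⟩ := can_some hS ((go_blk hcov1).reach hr1) hR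
      have hcb' : c = !b := by
        by_contra hne
        have : c = b := by cases b <;> cases c <;> simp_all
        subst this
        exact hb1 hc
      subst hcb'
      have hst : ∀ p ∈ R, (blk R reg v s C).pstate p = (blk R reg v s C₁).pstate p := by
        intro p hp; simp [blk, hp]
      refine ⟨C, Go.refl _ _, biv_of (hcb.mono Finset.subset_union_right) ?_⟩
      obtain ⟨t1, t2, t3⟩ := t
      by_cases hsame : (blk R reg v s C).regs = (blk R reg v s C₁).regs
      · exact (hc.agr ⟨hsame, hst⟩).mono Finset.subset_union_right
      · cases o with
        | read r w => exact absurd (by simp [blk, t3.2]) hsame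
        | write r w =>
          have t3' : C₁.regs = Function.update C.regs r w := t3
          have hrn : r ∉ R.image reg := by
            intro hrm
            apply hsame
            funext r'
            simp only [blk, t3']
            by_cases h : r' = r
            · subst h; rw [if_pos hrm, if_pos hrm]
            · rw [Function.update_of_ne h]
          have tk : A.Takes (blk R reg v s C) q (.write r w) (blk R reg v s C₁) := by
            refine ⟨by simpa [blk, hqR] using t1, ?_, ?_⟩
            · intro p hp; simp [blk, t2 p hp]
            · funext r'
              by_cases h : r' = r
              · subst h
                simp only [blk, Function.update_self, if_neg hrn, t3']
              · simp only [blk, Function.update_of_ne h, t3']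
          exact (hc.mono Finset.subset_union_right).back
            (Go.one (Finset.mem_union_left _ hq) tk)

/-- first write outside `L` in a solo execution -/
theorem solo_split (z : Proc) (L : Finset Reg) {C D : Config Proc Reg Val State}
    {l : List (Proc × Op Reg Val)} (e : A.Exec C l D) (hl : ∀ s ∈ l, s.1 ∈ ({z} : Finset Proc)) :
    (∃ F, Go A {z} C F ∧ (∀ r ∉ L, F.regs r = C.regs r) ∧
      ∃ r ∉ L, ∃ x s', A.step (F.pstate z) (.write r x) s') ∨
    (∀ r ∉ L, D.regs r = C.regs r) := by
  induction e with
  | nil C => right; intros; rfl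
  | @cons C C₁ C₂ q o l t _ ih =>
    have hq := hl (q, o) List.mem_cons_self
    have hqz : q = z := by simpa using hq
    subst hqz
    by_cases hout : ∃ r ∉ L, ∃ x, o = .write r x
    · obtain ⟨r, hr, x, rfl⟩ := hout
      exact Or.inl ⟨C, Go.refl _ _, fun _ _ => rfl, r, hr, x, _, t.1⟩
    · have g : Go A {q} C C₁ := Go.one hq t
      have hreg : ∀ r ∉ L, C₁.regs r = C.regs r := by
        intro r hr
        obtain ⟨_, _, t3⟩ := t
        cases o with
        | read r' x => rw [t3.2]
        | write r' x =>
          have t3' : C₁.regs = Function.update C.regs r' x := t3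
          rw [t3', Function.update_of_ne]
          rintro rfl
          exact hout ⟨r, hr, x, rfl⟩
      rcases ih (fun s hs => hl s (List.mem_cons_of_mem _ hs)) with ⟨F, g', h1, h2⟩ | h
      · exact Or.inl ⟨F, g.trans g', fun r hr => by rw [h1 r hr, hreg r hr], h2⟩
      · exact Or.inr fun r hr => by rw [h r hr, hreg r hr]

theorem pigeon (W L : ℕ → Finset Reg) (K : ℕ) (hW : Monotone W) (hK : ∀ i, (W i).card ≤ K)
    (hL : ∀ i, L i ⊆ W (i + 1)) : ∃ i j, i < j ∧ L i = L j := by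
  obtain ⟨N, hN⟩ : ∃ N, ∀ m, (W m).card ≤ (W N).card := by
    have hfin : (Set.range fun i => (W i).card).Finite :=
      (Set.finite_Iic K).subset (by rintro _ ⟨i, rfl⟩; exact hK i)
    obtain ⟨_, ⟨N, rfl⟩, h⟩ := Set.exists_max_image _ id hfin (Set.range_nonempty _)
    exact ⟨N, fun m => h _ ⟨m, rfl⟩⟩
  have hst : ∀ m, N ≤ m → W m = W N := fun m hm =>
    (Finset.eq_of_subset_of_card_le (hW hm) (hN m)).symm
  let f : ℕ → (W N).powerset := fun i => ⟨L (N + i), by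
    rw [Finset.mem_powerset, ← hst (N + i + 1) (by omega)]; exact hL _⟩
  obtain ⟨i, j, hij, hf⟩ := Finite.exists_ne_map_eq_of_infinite f
  have hf' : L (N + i) = L (N + j) := congrArg Subtype.val hf
  rcases Nat.lt_or_gt_of_ne hij with h | h
  · exact ⟨_, _, by omega, hf'⟩
  · exact ⟨_, _, by omega, hf'.symm⟩

theorem main_lemma [Nonempty Reg] {inputs : Proc → Bool} (hS : SoloTermination A inputs)
    (hA : Agreement A inputs) (K : ℕ) (hK : SpaceBound A inputs K) (m : ℕ) :
    ∀ (P : Finset Proc), P.card = m + 2 → ∀ C : Config Proc Reg Val State,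
      A.Reachable inputs C → Biv A P C →
      ∃ D Q reg v s, Q ⊆ P ∧ Q.card = 2 ∧ Go A P C D ∧ Biv A Q D ∧
        Covers A (P \ Q) reg v s D ∧ Set.InjOn reg (P \ Q : Finset Proc) := by
  induction m with
  | zero =>
    intro P hP C hr hb
    exact ⟨C, P, fun _ => Classical.arbitrary Reg, C.regs, C.pstate, subset_rfl, hP,
      Go.refl _ _, hb, by simp [Covers], by simp⟩
  | succ m ih =>
    intro P hP C hr hb
    obtain ⟨z, hz, C0, g0, hb0⟩ := drop_one hS (by omega) hr hb
    set V := P.erase z with hVdef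
    have hVP : V ⊆ P := Finset.erase_subset _ _
    have hzV : z ∉ V := by simp [hVdef]
    have hVc : V.card = m + 2 := by rw [hVdef, Finset.card_erase_of_mem hz]; omega
    let X := {x : List (Proc × Op Reg Val) × Config Proc Reg Val State //
      A.Exec (A.initConfig inputs) x.1 x.2 ∧ Biv A V x.2}
    let Rel : X → Finset Reg → X → Prop := fun x L y =>
      Go A V x.1.2 y.1.2 ∧
      ((writesList x.1.1).toFinset ⊆ (writesList y.1.1).toFinset) ∧
      (L ⊆ (writesList y.1.1).toFinset) ∧
      (∃ D Q reg v s, Q ⊆ V ∧ Q.card = 2 ∧ Go A V x.1.2 D ∧ Biv A Q D ∧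
        Covers A (V \ Q) reg v s D ∧ Set.InjOn reg (V \ Q : Finset Proc) ∧
        (V \ Q).image reg = L) ∧
      (∃ D R reg v s, R ⊆ V ∧ Go A V x.1.2 D ∧ Covers A R reg v s D ∧
        R.image reg = L ∧ y.1.2 = blk R reg v s D)
    have hnext : ∀ x : X, ∃ Ly : Finset Reg × X, Rel x Ly.1 Ly.2 := by
      rintro ⟨⟨E, C⟩, hE, hB⟩
      obtain ⟨D, Q, reg, v, s, hQ, hQc, g, hBQ, hcov, hinj⟩ := ih V hVc C ⟨E, hE⟩ hB
      have hrD := g.reach ⟨E, hE⟩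
      have hdis : Disjoint Q (V \ Q) := Finset.disjoint_sdiff
      obtain ⟨F, gF, hF⟩ := block_biv hS hA hdis hrD hcov hBQ
      rw [Finset.union_sdiff_of_subset hQ] at hF
      have hcovF := hcov.go gF hdis
      have gV : Go A V C F := g.trans (gF.mono hQ)
      obtain ⟨l1, hl1, e1⟩ := gV
      obtain ⟨l2, hl2, e2, hw2⟩ := exec_blk _ reg v s F hcovF
      refine ⟨⟨(V \ Q).image reg, ⟨⟨E ++ (l1 ++ l2), blk (V \ Q) reg v s F⟩,
        exec_append hE (exec_append e1 e2), hF⟩⟩, ?_, ?_, ?_, ?_, ?_⟩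
      · exact Go.trans ⟨l1, hl1, e1⟩ (Go.mono ⟨l2, hl2, e2⟩ Finset.sdiff_subset)
      · intro r hr
        simp only [writesList, List.mem_toFinset, List.filterMap_append, List.mem_append] at hr ⊢
        exact Or.inl hr
      · intro r hr
        have := hw2 hr
        simp only [writesList, List.mem_toFinset, List.filterMap_append, List.mem_append] at this ⊢
        exact Or.inr (Or.inr this)
      · exact ⟨D, Q, reg, v, s, hQ, hQc, g, hBQ, hcov, hinj, rfl⟩
      · exact ⟨F, V \ Q, reg, v, s, Finset.sdiff_subset, ⟨l1, hl1, e1⟩, hcovF, rfl, rfl⟩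
    choose nxt hnxt using hnext
    obtain ⟨E0, hE0⟩ := g0.reach hr
    let x0 : X := ⟨⟨E0, C0⟩, hE0, hb0⟩
    let x : ℕ → X := fun i => Nat.rec x0 (fun _ y => (nxt y).2) i
    have hx : ∀ i, Rel (x i) (nxt (x i)).1 (x (i + 1)) := fun i => hnxt (x i)
    obtain ⟨i, j, hij, hLL⟩ := pigeon (fun i => (writesList (x i).1.1).toFinset)
      (fun i => (nxt (x i)).1) K (monotone_nat_of_le_succ fun i => (hx i).2.1)
      (fun i => hK _ _ (x i).2.1) (fun i => (hx i).2.2.1)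
    have hgo : ∀ a k, Go A V (x a).1.2 (x (a + k)).1.2 := by
      intro a k
      induction k with
      | zero => exact Go.refl _ _
      | succ k ih => exact ih.trans (hx (a + k)).1
    have g0i : Go A V C0 (x i).1.2 := by
      have := hgo 0 i
      rwa [Nat.zero_add] at this
    have gij : Go A V (x (i + 1)).1.2 (x j).1.2 := by
      obtain ⟨k, rfl⟩ := Nat.exists_eq_add_of_lt hij
      have := hgo (i + 1) k
      rwa [show i + 1 + k = i + k + 1 by omega] at this
    obtain ⟨-, -, -, -, D, R, reg, v, s, hRV, gD, hcov, him, hy⟩ := hx i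
    obtain ⟨-, -, -, ⟨D2, Q, reg2, v2, s2, hQV, hQc, gD2, hBQ, hcov2, hinj2, him2⟩, -⟩ := hx j
    set L := (nxt (x i)).1 with hL
    rw [← hLL] at him2
    have hzR : z ∉ R := fun h => hzV (hRV h)
    have gCD : Go A P C D := g0.trans ((g0i.trans gD).mono hVP)
    have hrD := gCD.reach hr
    -- z runs alone
    have agr : ∀ F, Go A {z} D F → (∀ r ∉ L, F.regs r = D.regs r) →
        Agr V (blk R reg v s D) (blk R reg v s F) := by
      intro F gF hF
      refine ⟨?_, ?_⟩
      · funext r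
        simp only [blk, him]
        split_ifs with h
        · rfl
        · exact hF r h
      · intro p hp
        have hpz : p ∉ ({z} : Finset Proc) := by
          rw [Finset.mem_singleton]; rintro rfl; exact hzV hp
        simp only [blk]
        rw [gF.frame hpz]
    have hdz : Disjoint ({z} : Finset Proc) R := Finset.disjoint_singleton_left.2 hzR
    have hF : ∃ F, Go A {z} D F ∧ (∀ r ∉ L, F.regs r = D.regs r) ∧
        ∃ r ∉ L, ∃ w s', A.step (F.pstate z) (.write r w) s' := by
      obtain ⟨b, F, ⟨l, hl, e⟩, z', hz', ho⟩ := can_some hS hrD (Finset.singleton_nonempty z)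
      rw [Finset.mem_singleton] at hz'
      subst hz'
      rcases solo_split z' L e hl with h | h
      · exact h
      · exfalso
        have gF : Go A {z'} D F := ⟨l, hl, e⟩
        have hcan : Can A V (blk R reg v s F) (!b) := by
          have := (x (i+1)).2.2 (!b)
          rw [hy] at this
          exact this.agr (agr F gF h)
        obtain ⟨G, gG, p, hp, hp'⟩ := hcan
        have g2 : Go A V F G := ((go_blk (hcov.go gF hdz)).mono hRV).trans gG
        have h1 : A.output (G.pstate z') = some b := by rw [g2.frame hzV]; exact ho
        have := hA G (g2.reach (gF.reach hrD)) p z' _ _ hp' h1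
        cases b <;> simp at this
    obtain ⟨F, gF, hFr, r, hrL, w, s', hst⟩ := hF
    have gjD : Go A V (blk R reg v s D) D2 := by rw [← hy]; exact gij.trans gD2
    obtain ⟨G, gG, aG⟩ := sim gjD (agr F gF hFr)
    have gFG : Go A V F G := ((go_blk (hcov.go gF hdz)).mono hRV).trans gG
    have hzQ : z ∉ Q := fun h => hzV (hQV h)
    have hPQ : P \ Q = insert z (V \ Q) := by
      ext p
      simp only [hVdef, Finset.mem_sdiff, Finset.mem_insert, Finset.mem_erase]
      by_cases h : p = z
      · subst h; simp [hz, hzQ]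
      · simp [h]
    have hnz : ∀ p ∈ V \ Q, p ≠ z := by
      rintro p hp rfl; exact hzV (Finset.mem_sdiff.1 hp).1
    have hregL : ∀ p ∈ V \ Q, reg2 p ≠ r := by
      rintro p hp rfl
      exact hrL (him2 ▸ Finset.mem_image_of_mem _ hp)
    refine ⟨G, Q, Function.update reg2 z r, Function.update v2 r w, Function.update s2 z s',
      hQV.trans hVP, hQc, ?_, ?_, ?_, ?_⟩
    · exact gCD.trans ((gF.mono (Finset.singleton_subset_iff.2 hz)).trans (gFG.mono hVP))
    · exact fun b => (hBQ b).agr (aG.mono hQV)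
    · rw [hPQ]
      intro p hp
      rcases Finset.mem_insert.1 hp with rfl | hp
      · simp only [Function.update_self]
        rw [gFG.frame hzV]; exact hst
      · rw [Function.update_of_ne (hnz p hp), Function.update_of_ne (hnz p hp),
          Function.update_of_ne (hregL p hp), aG.2 p (Finset.mem_sdiff.1 hp).1]
        exact hcov2 p hp
    · rw [hPQ]
      intro p hp q hq hpq
      rcases Finset.mem_insert.1 (Finset.mem_coe.1 hp) with rfl | hp <;>
        rcases Finset.mem_insert.1 (Finset.mem_coe.1 hq) with rfl | hq
      · rfl
      · rw [Function.update_self, Function.update_of_ne (hnz q hq)] at hpq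
        exact absurd hpq.symm (hregL q hq)
      · rw [Function.update_self, Function.update_of_ne (hnz p hp)] at hpq
        exact absurd hpq (hregL p hp)
      · rw [Function.update_of_ne (hnz p hp), Function.update_of_ne (hnz q hq)] at hpq
        exact hinj2 (Finset.mem_coe.2 hp) (Finset.mem_coe.2 hq) hpq

end Helpers

/-- **Corollary.**  In a system of `n` anonymous processes, any binary
consensus algorithm satisfying nondeterministic solo termination must use `Ω(n)`
registers: for sufficiently large `n`, either some execution writes to more than
`n/20` distinct registers outright, or an execution can be constructed in which
`n/20` distinct registers are written to. -/
theorem linear_space_lower_bound :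
    ∃ n₀ : ℕ, ∀ (n : ℕ), n₀ ≤ n →
      ∀ (Reg Val State : Type) (_ : DecidableEq Reg) (A : Algo Reg Val State),
        (∀ inputs : Fin n → Bool, Agreement A inputs) →
        (∀ inputs : Fin n → Bool, Validity A inputs) →
        (∀ inputs : Fin n → Bool, SoloTermination A inputs) →
        (∃ (inputs : Fin n → Bool) (E : List (Fin n × Op Reg Val))
            (C : Config (Fin n) Reg Val State),
          A.Exec (A.initConfig inputs) E C ∧
            n / 20 < (writesList E).toFinset.card) ∨
        (∃ (inputs : Fin n → Bool) (E : List (Fin n × Op Reg Val))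
            (C : Config (Fin n) Reg Val State),
          A.Exec (A.initConfig inputs) E C ∧
            n / 20 ≤ (writesList E).toFinset.card) := by
  refine ⟨2, ?_⟩
  intro n hn Reg Val State _ A hA hV hS
  right
  by_contra hno
  push Not at hno
  let p0 : Fin n := ⟨0, by omega⟩
  let p1 : Fin n := ⟨1, by omega⟩
  have hp01 : p1 ≠ p0 := by simp [p0, p1, Fin.ext_iff]
  let inputs : Fin n → Bool := fun p => decide (p = p1)
  have hr0 : A.Reachable inputs (A.initConfig inputs) := ⟨[], .nil _⟩
  have hsolo : ∀ p : Fin n, Nonempty Reg ∧ Can A {p} (A.initConfig inputs) (inputs p) := by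
    intro p
    obtain ⟨b, C, ⟨l, hl, e⟩, q, hq, ho⟩ := can_some (hS inputs) hr0 (Finset.singleton_nonempty p)
    obtain ⟨q', o, hm, hi⟩ := hV inputs l C e q b ho
    have hq' : q' = p := by simpa using hl _ hm
    subst hq'
    subst hi
    exact ⟨⟨o.target⟩, C, ⟨l, hl, e⟩, q, hq, ho⟩
  haveI : Nonempty Reg := (hsolo p0).1
  have h0 : Can A Finset.univ (A.initConfig inputs) false := by
    have := (hsolo p0).2.mono (Finset.subset_univ _)
    simpa [inputs, hp01.symm] using this
  have h1 : Can A Finset.univ (A.initConfig inputs) true := by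
    have := (hsolo p1).2.mono (Finset.subset_univ _)
    simpa [inputs] using this
  have hb : Biv A Finset.univ (A.initConfig inputs) := biv_of h0 h1
  obtain ⟨D, Q, reg, v, s, -, hQ, ⟨l, -, e⟩, -, hcov, hinj⟩ :=
    main_lemma (hS inputs) (hA inputs) (n / 20) (fun E C h => (hno inputs E C h).le) (n - 2)
      Finset.univ (by simp; omega) _ hr0 hb
  obtain ⟨l2, -, e2, hw⟩ := exec_blk _ reg v s D hcov
  have hlt := hno inputs _ _ (exec_append e e2)
  have hcard : (Finset.univ \ Q).card = n - 2 := by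
    rw [Finset.card_sdiff_of_subset (Finset.subset_univ _), hQ]; simp
  have hle : ((Finset.univ \ Q).image reg).card ≤ (writesList (l ++ l2)).toFinset.card := by
    apply Finset.card_le_card
    intro r hr
    have := hw hr
    simp only [writesList, List.mem_toFinset, List.filterMap_append, List.mem_append] at this ⊢
    exact Or.inr this
  rw [Finset.card_image_of_injOn hinj, hcard] at hle
  omega
end
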